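/- Suppose {u_θ} and {v_θ} are linearly independent families spanning H and K, and there exists a completely positive unital map Λ with Λ(|u_θ⟩⟨u_θ|) = |v_θ⟩⟨v_θ| for all θ. Then for every subset Θ₁ ⊆ Θ, det([G_U]_{Θ₁,Θ₁}) ≥ det([G_V]_{Θ₁,Θ₁}), where [G]_{Θ₁,Θ₁} denotes the principal submatrix indexed by Θ₁. -/

import Mathlib

open Matrix Finset
open scoped ComplexOrder

noncomputable section

/-- The rank-one operator `|u⟩⟨u|` as a matrix: `(outer u) i j = u i * conj (u j)`. -/
def outer {n : ℕ} (u : Fin n → ℂ) : Matrix (Fin n) (Fin n) ℂ :=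
  Matrix.vecMulVec u (star u)

/-- A linear map on matrices is completely positive iff it admits a Kraus representation. -/
def IsCPMap {n m : ℕ}
    (Λ : Matrix (Fin n) (Fin n) ℂ →ₗ[ℂ] Matrix (Fin m) (Fin m) ℂ) : Prop :=
  ∃ (k : ℕ) (W : Fin k → Matrix (Fin m) (Fin n) ℂ),
    ∀ X, Λ X = ∑ i, W i * X * (W i)ᴴ

/-- `Λ` is unital: `Λ(I) = I`. -/
def IsUnital {n m : ℕ}
    (Λ : Matrix (Fin n) (Fin n) ℂ →ₗ[ℂ] Matrix (Fin m) (Fin m) ℂ) : Prop :=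
  Λ 1 = 1

/-- `Λ` is subunital: `Λ(I) ≤ I` in the Loewner order. -/
def IsSubunital {n m : ℕ}
    (Λ : Matrix (Fin n) (Fin n) ℂ →ₗ[ℂ] Matrix (Fin m) (Fin m) ℂ) : Prop :=
  ((1 : Matrix (Fin m) (Fin m) ℂ) - Λ 1).PosSemidef

/-- Gram matrix of a family of vectors. -/
def gram {Θ : Type*} {n : ℕ} (u : Θ → (Fin n → ℂ)) : Matrix Θ Θ ℂ :=
  Matrix.of fun θ θ' => star (u θ) ⬝ᵥ u θ'

/-- Largest real eigenvalue of a matrix (intended for Hermitian matrices). -/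
def lamMax {n : ℕ} (A : Matrix (Fin n) (Fin n) ℂ) : ℝ :=
  sSup {r : ℝ | ∃ x : Fin n → ℂ, x ≠ 0 ∧ A.mulVec x = (r : ℂ) • x}

/-- Smallest real eigenvalue of a matrix (intended for Hermitian matrices). -/
def lamMin {n : ℕ} (A : Matrix (Fin n) (Fin n) ℂ) : ℝ :=
  sInf {r : ℝ | ∃ x : Fin n → ℂ, x ≠ 0 ∧ A.mulVec x = (r : ℂ) • x}

/-- Operator (spectral) norm of a matrix. -/
def opNorm {n : ℕ} (A : Matrix (Fin n) (Fin n) ℂ) : ℝ :=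
  ‖Matrix.toEuclideanCLM (𝕜 := ℂ) A‖

/-- Squared Euclidean norm. -/
def nsq {n : ℕ} (z : Fin n → ℂ) : ℝ := ∑ i, Complex.normSq (z i)

lemma nsq_nonneg {n : ℕ} (z : Fin n → ℂ) : 0 ≤ nsq z :=
  Finset.sum_nonneg fun _ _ => Complex.normSq_nonneg _

lemma star_dot_self {n : ℕ} (z : Fin n → ℂ) : star z ⬝ᵥ z = (nsq z : ℂ) := by
  simp [dotProduct, nsq, Complex.normSq_eq_conj_mul_self]

lemma nsq_eq_norm {n : ℕ} (z : Fin n → ℂ) : nsq z = ‖WithLp.toLp 2 z‖ ^ 2 := by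
  simp [EuclideanSpace.norm_sq_eq, nsq, Complex.normSq_eq_norm_sq]

lemma cs_nsq {n : ℕ} (a b : Fin n → ℂ) :
    Complex.normSq (star a ⬝ᵥ b) ≤ nsq a * nsq b := by
  have h := norm_inner_le_norm (𝕜 := ℂ) (WithLp.toLp 2 a) (WithLp.toLp 2 b)
  rw [EuclideanSpace.inner_toLp_toLp, dotProduct_comm] at h
  rw [nsq_eq_norm, nsq_eq_norm, Complex.normSq_eq_norm_sq, ← mul_pow]
  exact pow_le_pow_left₀ (norm_nonneg _) h 2

lemma quad_outer {n m : ℕ} (A : Matrix (Fin m) (Fin n) ℂ) (x : Fin n → ℂ) (y : Fin m → ℂ) :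
    star y ⬝ᵥ ((A * outer x * Aᴴ) *ᵥ y) = (Complex.normSq (star y ⬝ᵥ A *ᵥ x) : ℂ) := by
  have h : A * outer x * Aᴴ = vecMulVec (A *ᵥ x) (star (A *ᵥ x)) := by
    rw [outer, Matrix.mul_vecMulVec, Matrix.vecMulVec_mul, Matrix.star_mulVec]
  have h2 : star (A *ᵥ x) ⬝ᵥ y = star (star y ⬝ᵥ A *ᵥ x) := by
    rw [Matrix.star_dotProduct]
  rw [h, Matrix.vecMulVec_mulVec, h2, Complex.normSq_eq_conj_mul_self]
  simp [mul_comm]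

lemma quad_one {n m : ℕ} (A : Matrix (Fin m) (Fin n) ℂ) (y : Fin m → ℂ) :
    star y ⬝ᵥ ((A * (1 : Matrix (Fin n) (Fin n) ℂ) * Aᴴ) *ᵥ y) = (nsq (Aᴴ *ᵥ y) : ℂ) := by
  rw [← star_dot_self, Matrix.star_mulVec, Matrix.conjTranspose_conjTranspose, Matrix.mul_one,
    ← Matrix.mulVec_mulVec, Matrix.dotProduct_mulVec]

lemma key {Θ : Type*} {n m : ℕ}
    (u : Θ → (Fin n → ℂ)) (v : Θ → (Fin m → ℂ))
    (Λ : Matrix (Fin n) (Fin n) ℂ →ₗ[ℂ] Matrix (Fin m) (Fin m) ℂ)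
    (hCP : IsCPMap Λ) (hUnital : IsUnital Λ)
    (hconv : ∀ θ, Λ (outer (u θ)) = outer (v θ))
    {k : ℕ} (f : Fin k → Θ) (t : Θ) (a b : Fin k → ℂ) (x : Fin n → ℂ) (y : Fin m → ℂ)
    (hx : x = u t - ∑ s, a s • u (f s)) (hy : y = v t - ∑ s, b s • v (f s))
    (hyo : ∀ s, star y ⬝ᵥ v (f s) = 0) : nsq y ≤ nsq x := by
  obtain ⟨l, W, hW⟩ := hCP
  have h1 : ∀ θ, ∑ i, Complex.normSq (star y ⬝ᵥ W i *ᵥ u θ)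
      = Complex.normSq (star y ⬝ᵥ v θ) := by
    intro θ
    have h := congrArg (fun M => star y ⬝ᵥ (M *ᵥ y)) (hconv θ)
    have h' := quad_outer (1 : Matrix (Fin m) (Fin m) ℂ) (v θ) y
    simp only [Matrix.one_mul, Matrix.conjTranspose_one, Matrix.mul_one, Matrix.one_mulVec] at h'
    simp only [hW, Matrix.sum_mulVec, dotProduct_sum, quad_outer, h'] at h
    exact_mod_cast h
  have h2 : ∑ i, nsq ((W i)ᴴ *ᵥ y) = nsq y := by
    have h := congrArg (fun M => star y ⬝ᵥ (M *ᵥ y)) hUnital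
    simp only [hW, Matrix.sum_mulVec, dotProduct_sum, quad_one, Matrix.one_mulVec,
      star_dot_self] at h
    exact_mod_cast h
  have h3 : ∀ s i, star y ⬝ᵥ W i *ᵥ u (f s) = 0 := by
    intro s i
    have h := h1 (f s)
    rw [hyo, map_zero, Finset.sum_eq_zero_iff_of_nonneg
      (fun _ _ => Complex.normSq_nonneg _)] at h
    exact Complex.normSq_eq_zero.1 (h i (Finset.mem_univ _))
  have h4 : ∀ i, star y ⬝ᵥ W i *ᵥ x = star y ⬝ᵥ W i *ᵥ u t := by
    intro i
    simp [hx, Matrix.mulVec_sub, Matrix.mulVec_sum, Matrix.mulVec_smul, dotProduct_sub,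
      dotProduct_sum, h3]
  have h5 : star y ⬝ᵥ v t = (nsq y : ℂ) := by
    rw [← star_dot_self]
    conv_rhs => rw [hy, dotProduct_sub, ← hy]
    simp [dotProduct_sum, hyo]
  have h6 : nsq y * nsq y ≤ nsq y * nsq x := by
    calc nsq y * nsq y = ∑ i, Complex.normSq (star y ⬝ᵥ W i *ᵥ x) := by
          simp only [h4, h1, h5, Complex.normSq_ofReal]
      _ ≤ ∑ i, nsq ((W i)ᴴ *ᵥ y) * nsq x := by
          refine Finset.sum_le_sum fun i _ => ?_
          have := cs_nsq ((W i)ᴴ *ᵥ y) x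
          rwa [Matrix.star_mulVec, Matrix.conjTranspose_conjTranspose,
            ← Matrix.dotProduct_mulVec] at this
      _ = _ := by rw [← Finset.sum_mul, h2]
  rcases (nsq_nonneg y).eq_or_lt with h | h
  · rw [← h]; exact nsq_nonneg x
  · exact le_of_mul_le_mul_left h6 h

lemma exists_proj {n k : ℕ} (w : Fin k → Fin n → ℂ) (z : Fin n → ℂ) :
    ∃ a : Fin k → ℂ, ∀ s, star (z - ∑ r, a r • w r) ⬝ᵥ w s = 0 := by
  let K : Submodule ℂ (EuclideanSpace ℂ (Fin n)) :=
    Submodule.span ℂ (Set.range fun s => WithLp.toLp 2 (w s))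
  have hp : K.starProjection (WithLp.toLp 2 z) ∈ K := Submodule.starProjection_apply_mem _ _
  obtain ⟨a, ha⟩ := (Submodule.mem_span_range_iff_exists_fun ℂ).1 hp
  refine ⟨a, fun s => ?_⟩
  have h := Submodule.starProjection_inner_eq_zero (K := K) (WithLp.toLp 2 z)
    (WithLp.toLp 2 (w s)) (Submodule.subset_span ⟨s, rfl⟩)
  rw [← ha] at h
  have e : (WithLp.toLp 2 z - ∑ r, a r • WithLp.toLp 2 (w r) : EuclideanSpace ℂ (Fin n))
      = WithLp.toLp 2 (z - ∑ r, a r • w r) := by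
    simp [WithLp.toLp_sum]
  rw [e, EuclideanSpace.inner_toLp_toLp, dotProduct_comm] at h
  exact h

lemma det_step {n k : ℕ} (w : Fin (k+1) → Fin n → ℂ) (a : Fin k → ℂ) (y : Fin n → ℂ)
    (hy : y = w (Fin.last k) - ∑ r, a r • w r.castSucc)
    (ho : ∀ s : Fin k, star y ⬝ᵥ w s.castSucc = 0) :
    (_root_.gram w).det = (_root_.gram fun s : Fin k => w s.castSucc).det * (nsq y : ℂ) := by
  let e : Fin k ⊕ Fin 1 ≃ Fin (k+1) := finSumFinEquiv
  let V : Matrix (Fin n) (Fin k) ℂ := Matrix.of fun i s => w s.castSucc i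
  let Z : Matrix (Fin n) (Fin 1) ℂ := Matrix.of fun i _ => w (Fin.last k) i
  let Y : Matrix (Fin n) (Fin 1) ℂ := Matrix.of fun i _ => y i
  let A : Matrix (Fin k) (Fin 1) ℂ := Matrix.of fun s _ => a s
  have hY : Y = Z - V * A := by
    ext i j
    simp [Y, Z, V, A, Matrix.mul_apply, hy, mul_comm]
  let L : Matrix (Fin k ⊕ Fin 1) (Fin k ⊕ Fin 1) ℂ := fromBlocks 1 (-A) 0 1
  have hL : L.det = 1 := by simp [L]
  have hVY : Yᴴ * V = 0 := by
    ext i j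
    simpa [Matrix.mul_apply, dotProduct, Y, V] using ho j
  have hYV : Vᴴ * Y = 0 := by
    have := congrArg conjTranspose hVY
    simpa using this
  have hG : (_root_.gram w).submatrix e e = fromBlocks (Vᴴ * V) (Vᴴ * Z) (Zᴴ * V) (Zᴴ * Z) := by
    have e1 : ∀ s : Fin k, e (Sum.inl s) = s.castSucc := fun s => rfl
    have e2 : ∀ s : Fin 1, e (Sum.inr s) = Fin.last k := fun s => by
      ext; simp [e]
    ext i j
    rcases i with i | i <;> rcases j with j | j <;>
      simp [_root_.gram, e1, e2, V, Z, Matrix.mul_apply, dotProduct]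
  have hV : _root_.gram (fun s : Fin k => w s.castSucc) = Vᴴ * V := by
    ext i j
    simp [_root_.gram, V, Matrix.mul_apply, dotProduct]
  have hYY : (Yᴴ * Y).det = (nsq y : ℂ) := by
    rw [← star_dot_self]
    simp [Y, Matrix.mul_apply, dotProduct]
  have hZ : Z = Y + V * A := by rw [hY]; abel
  have hLG : Lᴴ * (_root_.gram w).submatrix e e * L = fromBlocks (Vᴴ * V) 0 0 (Yᴴ * Y) := by
    have q1 : Vᴴ * Z = Vᴴ * V * A := by
      rw [hZ, Matrix.mul_add, hYV, zero_add, Matrix.mul_assoc]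
    have q2 : Zᴴ * V = Aᴴ * (Vᴴ * V) := by
      rw [hZ, conjTranspose_add, Matrix.add_mul, hVY, zero_add, conjTranspose_mul,
        Matrix.mul_assoc]
    have q3 : Zᴴ * Z = Yᴴ * Y + Aᴴ * (Vᴴ * V * A) := by
      conv_lhs => rw [hZ]
      rw [conjTranspose_add, Matrix.add_mul, Matrix.mul_add, ← Matrix.mul_assoc Yᴴ V A, hVY,
        conjTranspose_mul, Matrix.mul_assoc Aᴴ, Matrix.mul_add, hYV]
      simp [Matrix.mul_assoc]
    rw [hG, q1, q2, q3]
    simp [L, fromBlocks_conjTranspose, fromBlocks_multiply, Matrix.mul_assoc]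
  have hd := congrArg Matrix.det hLG
  rw [det_mul, det_mul, det_conjTranspose, hL, det_fromBlocks_zero₂₁, hYY, ← hV,
    det_submatrix_equiv_self] at hd
  simpa using hd

lemma main_fin {Θ : Type*} {n m : ℕ}
    (u : Θ → (Fin n → ℂ)) (v : Θ → (Fin m → ℂ))
    (Λ : Matrix (Fin n) (Fin n) ℂ →ₗ[ℂ] Matrix (Fin m) (Fin m) ℂ)
    (hCP : IsCPMap Λ) (hUnital : IsUnital Λ)
    (hconv : ∀ θ, Λ (outer (u θ)) = outer (v θ)) (k : ℕ) : ∀ f : Fin k → Θ,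
    ∃ p q : ℝ, (_root_.gram fun s => u (f s)).det = p ∧ (_root_.gram fun s => v (f s)).det = q ∧
      0 ≤ q ∧ q ≤ p := by
  induction k with
  | zero => intro f; exact ⟨1, 1, by simp, by simp, by simp, le_rfl⟩
  | succ k ih =>
    intro f
    obtain ⟨p, q, hp, hq, h0, hle⟩ := ih fun s => f s.castSucc
    obtain ⟨a, ha⟩ := exists_proj (fun s : Fin k => u (f s.castSucc)) (u (f (Fin.last k)))
    obtain ⟨b, hb⟩ := exists_proj (fun s : Fin k => v (f s.castSucc)) (v (f (Fin.last k)))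
    have hk := key u v Λ hCP hUnital hconv (fun s : Fin k => f s.castSucc) (f (Fin.last k)) a b
      _ _ rfl rfl hb
    have hdu := det_step (fun s => u (f s)) a _ rfl ha
    have hdv := det_step (fun s => v (f s)) b _ rfl hb
    rw [hp, ← Complex.ofReal_mul] at hdu
    rw [hq, ← Complex.ofReal_mul] at hdv
    exact ⟨_, _, hdu, hdv, mul_nonneg h0 (nsq_nonneg _),
      mul_le_mul hle hk (nsq_nonneg _) (h0.trans hle)⟩

theorem stmt5 {Θ : Type*} [Fintype Θ] [DecidableEq Θ] {n m : ℕ}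
    (u : Θ → (Fin n → ℂ)) (v : Θ → (Fin m → ℂ))
    (hu : LinearIndependent ℂ u) (hv : LinearIndependent ℂ v)
    (hus : Submodule.span ℂ (Set.range u) = ⊤)
    (hvs : Submodule.span ℂ (Set.range v) = ⊤)
    (Λ : Matrix (Fin n) (Fin n) ℂ →ₗ[ℂ] Matrix (Fin m) (Fin m) ℂ)
    (hCP : IsCPMap Λ) (hUnital : IsUnital Λ)
    (hconv : ∀ θ, Λ (outer (u θ)) = outer (v θ)) :
    ∀ S : Finset Θ,
      (((gram u).submatrix (Subtype.val : {a // a ∈ S} → Θ) Subtype.val).det).re ≥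
        (((gram v).submatrix (Subtype.val : {a // a ∈ S} → Θ) Subtype.val).det).re := by
  intro S
  let e : Fin (Fintype.card {a // a ∈ S}) ≃ {a // a ∈ S} := (Fintype.equivFin _).symm
  obtain ⟨p, q, hp, hq, -, hle⟩ := main_fin u v Λ hCP hUnital hconv _ fun s => (e s).val
  rw [← det_submatrix_equiv_self e, ← det_submatrix_equiv_self e
    ((_root_.gram v).submatrix (Subtype.val : {a // a ∈ S} → Θ) Subtype.val)]
  change ((_root_.gram fun s => u (e s).val).det).re ≥ ((_root_.gram fun s => v (e s).val).det).re
  rw [hp, hq]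
  exact hle
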